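/- arXiv:1909.09245 — 3 statements merged into one kernel-verified Lean document; each statement's English description precedes it below -/
import Mathlib

section
/- The element (σ1σ2)^3 σ2^{-4} of the braid group B_3 is quasipositive; that is, it can be written as a finite product of conjugates of the generators σ1 and σ2. (Explicitly, (σ1σ2)^3 σ2^{-4} = (σ2 σ1 σ2^{-1}) · (σ2^3 σ1 σ2^{-3}).) -/
/-- The single braid relator σ₁σ₂σ₁(σ₂σ₁σ₂)⁻¹ in the free group on two generators. -/
def braidRels : Set (FreeGroup (Fin 2)) :=
  {FreeGroup.of 0 * FreeGroup.of 1 * FreeGroup.of 0 *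
    (FreeGroup.of 1 * FreeGroup.of 0 * FreeGroup.of 1)⁻¹}

/-- The braid group B₃ = ⟨σ₁, σ₂ ∣ σ₁σ₂σ₁ = σ₂σ₁σ₂⟩. -/
abbrev B3 : Type := PresentedGroup braidRels

/-- The generator σ₁ of B₃. -/
def σ₁ : B3 := PresentedGroup.of 0

/-- The generator σ₂ of B₃. -/
def σ₂ : B3 := PresentedGroup.of 1

/-- A 3-braid is quasipositive if it is a finite product of conjugates of the
generators σ₁ and σ₂. -/
def Quasipositive (β : B3) : Prop :=
  ∃ (k : ℕ) (w g : Fin k → B3),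
    (∀ i, g i = σ₁ ∨ g i = σ₂) ∧
    β = (List.ofFn fun i => w i * g i * (w i)⁻¹).prod

/-- The braid relation in B₃. -/
theorem braid_relation : σ₁ * σ₂ * σ₁ = σ₂ * σ₁ * σ₂ := by
  have h : PresentedGroup.mk braidRels (FreeGroup.of 0 * FreeGroup.of 1 * FreeGroup.of 0 *
      (FreeGroup.of 1 * FreeGroup.of 0 * FreeGroup.of 1)⁻¹) = 1 :=
    PresentedGroup.one_of_mem (Set.mem_singleton _)
  rw [map_mul, map_inv, mul_inv_eq_one] at h
  simp only [map_mul] at h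
  exact h

/-- The 3-braid (σ₁σ₂)³σ₂⁻⁴ is quasipositive. -/
theorem quasipositive_h_sigma2_neg4 :
    Quasipositive ((σ₁ * σ₂) ^ 3 * σ₂ ^ (-4 : ℤ)) := by
  refine ⟨2, ![σ₂, σ₂ ^ 3], ![σ₁, σ₁], ?_, ?_⟩
  · intro i
    fin_cases i <;> simp
  · have key : (σ₁ * σ₂) ^ 3 = (σ₂ * σ₁ * σ₂) * (σ₂ * σ₁ * σ₂) := by
      calc (σ₁ * σ₂) ^ 3 = (σ₁ * σ₂ * σ₁) * (σ₂ * σ₁ * σ₂) := by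
            simp only [pow_succ, pow_zero, one_mul, mul_assoc]
        _ = _ := by rw [braid_relation]
    rw [key]
    simp [List.ofFn_succ]
    group
    simp only [zpow_ofNat, pow_two, mul_assoc]
end

section
/- Let S be a finite set of affine functions ℝ → ℝ. Then the set of continuous functions f : [0,1] → ℝ that are piecewise along S is finite. -/
/-- A function `f` on `[0,1]` is *piecewise along* a set `S` of functions `ℝ → ℝ`
if there are finitely many points `0 = t₀ < t₁ < ⋯ < t_k = 1` such that on each
subinterval `[t_{i-1}, t_i]` the function `f` coincides with some element of `S`. -/
def PiecewiseAlong (S : Set (ℝ → ℝ)) (f : Set.Icc (0 : ℝ) 1 → ℝ) : Prop :=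
  ∃ (k : ℕ) (t : ℕ → ℝ), t 0 = 0 ∧ t k = 1 ∧ (∀ i, i < k → t i < t (i + 1)) ∧
    ∀ i, i < k → ∃ g ∈ S, ∀ x : Set.Icc (0 : ℝ) 1,
      t i ≤ (x : ℝ) → (x : ℝ) ≤ t (i + 1) → f x = g (x : ℝ)

theorem piecewiseAlong_exists_mem (S : Set (ℝ → ℝ)) (f : Set.Icc (0 : ℝ) 1 → ℝ)
    (hf : PiecewiseAlong S f) (x : Set.Icc (0 : ℝ) 1) : ∃ g ∈ S, f x = g x := by
  obtain ⟨k, t, h0, h1, -, h⟩ := hf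
  by_contra hcon
  have key : ∀ i, i ≤ k → t i ≤ (x : ℝ) ∧ (i < k → t i ≤ (x : ℝ)) := by
    intro i
    induction i with
    | zero => intro _; rw [h0]; exact ⟨x.2.1, fun _ => x.2.1⟩
    | succ n ih =>
      intro hn
      have h2 := (ih (by omega)).1
      have h3 : t (n + 1) ≤ (x : ℝ) := by
        by_contra h4
        obtain ⟨g, hg, hx⟩ := h n (by omega)
        exact hcon ⟨g, hg, hx x h2 (le_of_not_ge h4)⟩
      exact ⟨h3, fun _ => h3⟩
  have hk : 0 < k := by
    rcases Nat.eq_zero_or_pos k with rfl | hk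
    · rw [h0] at h1; norm_num at h1
    · exact hk
  obtain ⟨g, hg, hx⟩ := h (k - 1) (by omega)
  refine hcon ⟨g, hg, hx x (key _ (by omega)).1 ?_⟩
  rw [Nat.sub_add_cancel hk, h1]
  exact x.2.2

/-- If `S` is a finite set of affine functions `ℝ → ℝ`, then the set of continuous
functions `f : [0,1] → ℝ` that are piecewise along `S` is finite. -/
theorem finite_of_piecewiseAlong_affine (S : Set (ℝ → ℝ)) (hS : S.Finite)
    (haff : ∀ g ∈ S, ∃ b m : ℝ, g = fun t : ℝ => b + m * t) :
    {f : C(Set.Icc (0 : ℝ) 1, ℝ) | PiecewiseAlong S f}.Finite := by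
  set P : Set (Set.Icc (0 : ℝ) 1) :=
    ⋃ g ∈ S, ⋃ h ∈ S, {x | g ≠ h ∧ g (x : ℝ) = h (x : ℝ)} with hP
  have hPfin : P.Finite := by
    refine hS.biUnion fun g hg => hS.biUnion fun h hh => Set.Subsingleton.finite ?_
    rintro x ⟨hne, hx⟩ y ⟨-, hy⟩
    obtain ⟨b, m, rfl⟩ := haff g hg
    obtain ⟨c, n, rfl⟩ := haff h hh
    simp only at hx hy
    by_contra hxy
    have hxy' : (x : ℝ) - y ≠ 0 := sub_ne_zero.2 fun e => hxy (Subtype.ext e)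
    have hmn : (m - n) * ((x : ℝ) - y) = 0 := by linear_combination hx - hy
    have hm : m = n := by
      rcases mul_eq_zero.1 hmn with h | h
      · linarith
      · exact absurd h hxy'
    subst hm
    have : b = c := by linarith
    subst this
    exact hne rfl
  have hcont : ∀ g ∈ S, Continuous g := by
    intro g hg
    obtain ⟨b, m, rfl⟩ := haff g hg
    fun_prop
  have hmemP : ∀ x ∉ P, ∀ g ∈ S, ∀ h ∈ S, g (x : ℝ) = h (x : ℝ) → g = h := by
    intro x hx g hg h hh e
    by_contra hne
    exact hx (by simp only [hP, Set.mem_iUnion]; exact ⟨g, hg, h, hh, hne, e⟩)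
  set idx : Set.Icc (0 : ℝ) 1 → Set (Set.Icc (0 : ℝ) 1) := fun x => {p ∈ P | p < x} with hidx
  obtain ⟨T, hTP, hT⟩ := Set.exists_subset_bijOn Pᶜ idx
  have himg : (idx '' Pᶜ).Finite := by
    refine hPfin.finite_subsets.subset ?_
    rintro _ ⟨x, -, rfl⟩
    exact fun p hp => hp.1
  have hTfin : T.Finite := by
    apply Set.Finite.of_finite_image _ hT.injOn
    rw [hT.image_eq]; exact himg
  have : Finite T := hTfin
  have hpi : (Set.univ.pi fun x : T => (fun g : ℝ → ℝ => g (x : Set.Icc (0 : ℝ) 1)) '' S).Finite :=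
    Set.Finite.pi' (fun x => hS.image _) |>.subset (by intro f hf x; exact hf x trivial)
  refine Set.Finite.of_finite_image (f := fun f => fun x : T => f x) (hpi.subset ?_) ?_
  · rintro _ ⟨f, hf, rfl⟩ x -
    obtain ⟨g, hg, e⟩ := piecewiseAlong_exists_mem S f hf x
    exact ⟨g, hg, e.symm⟩
  · intro f₁ hf₁ f₂ hf₂ he
    have hdense : Dense Pᶜ := by simpa [Set.compl_eq_univ_diff] using dense_univ.diff_finite hPfin
    refine DFunLike.coe_injective (Continuous.ext_on hdense f₁.continuous f₂.continuous ?_)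
    intro x hx
    obtain ⟨y, hyT, hy⟩ := hT.surjOn ⟨x, hx, rfl⟩
    have hyP := hTP hyT
    have hdis : ∀ z ∈ Set.uIcc x y, z ∉ P := by
      intro z hz hzP
      have hzx : z ≠ x := by rintro rfl; exact hx hzP
      have hzy : z ≠ y := by rintro rfl; exact hyP hzP
      have hiff : z < y ↔ z < x := by
        have := Set.ext_iff.1 hy z
        simpa [hidx, hzP] using this
      rcases Set.mem_uIcc.1 hz with ⟨h1, h2⟩ | ⟨h1, h2⟩
      · exact absurd (hiff.1 (lt_of_le_of_ne h2 hzy)) (not_lt.2 h1)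
      · exact absurd (hiff.2 (lt_of_le_of_ne h2 hzx)) (not_lt.2 h1)
    have hpre : IsPreconnected (Set.uIcc x y) := Set.ordConnected_uIcc.isPreconnected
    set A : Set (Set.Icc (0 : ℝ) 1) := {z | f₁ z = f₂ z}
    set B : Set (Set.Icc (0 : ℝ) 1) :=
      ⋃ g ∈ S, ⋃ h ∈ S, {z | g ≠ h ∧ f₁ z = g z ∧ f₂ z = h z} with hB
    have hA : IsClosed A := isClosed_eq f₁.continuous f₂.continuous
    have hBc : IsClosed B := by
      refine hS.isClosed_biUnion fun g hg => hS.isClosed_biUnion fun h hh => ?_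
      refine isClosed_const.inter (IsClosed.inter ?_ ?_)
      · exact isClosed_eq f₁.continuous ((hcont g hg).comp continuous_subtype_val)
      · exact isClosed_eq f₂.continuous ((hcont h hh).comp continuous_subtype_val)
    have hcov : Set.uIcc x y ⊆ A ∪ B := by
      intro z hz
      obtain ⟨g, hg, e1⟩ := piecewiseAlong_exists_mem S f₁ hf₁ z
      obtain ⟨h, hh, e2⟩ := piecewiseAlong_exists_mem S f₂ hf₂ z
      by_cases hgh : g = h
      · left; subst hgh; exact e1.trans e2.symm
      · right; simp only [hB, Set.mem_iUnion]; exact ⟨g, hg, h, hh, hgh, e1, e2⟩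
    have hdj : Set.uIcc x y ∩ (A ∩ B) = ∅ := by
      ext z
      simp only [Set.mem_inter_iff, Set.mem_empty_iff_false, iff_false]
      rintro ⟨hz, hzA, hzB⟩
      simp only [hB, Set.mem_iUnion] at hzB
      obtain ⟨g, hg, h, hh, hne, e1, e2⟩ := hzB
      exact hne (hmemP z (hdis z hz) g hg h hh (by rw [← e1, ← e2]; exact hzA))
    have hyA : y ∈ A := congrFun he ⟨y, hyT⟩
    rcases isPreconnected_iff_subset_of_disjoint_closed.1 hpre A B hA hBc hcov hdj with h | h
    · exact h Set.left_mem_uIcc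
    · have : y ∈ Set.uIcc x y ∩ (A ∩ B) := ⟨Set.right_mem_uIcc, hyA, h Set.right_mem_uIcc⟩
      rw [hdj] at this
      exact this.elim
end

section
/- Fix a natural number c ≥ 1. Then the set of continuous functions f : [0,1] → ℝ with f(0) = 0 that are piecewise along the set of affine functions { t ↦ a + m t : a ∈ ℤ, m ∈ ℤ, |m| ≤ c } is finite. (This is the combinatorial content of the theorem that for a fixed concordance genus c there are only finitely many possibilities for the knot Floer invariant Υ_K(t) of knots K of concordance genus c: on [0,1], Υ_K is such a function.) -/
/-- Two lines with small integral slopes do not cross strictly between consecutive multiples of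
`1 / (2c)!`. -/
lemma no_crossing (c : ℕ) (a m a' m' : ℤ) (hm : |m| ≤ (c : ℤ)) (hm' : |m'| ≤ (c : ℤ))
    (t : ℝ) (j : ℤ) (h1 : (j : ℝ) < (Nat.factorial (2 * c) : ℝ) * t)
    (h2 : (Nat.factorial (2 * c) : ℝ) * t < j + 1)
    (h : (a : ℝ) + m * t = a' + m' * t) : a = a' ∧ m = m' := by
  have hmm : m = m' := by
    by_contra hne
    have hd : (m - m').natAbs ∣ Nat.factorial (2 * c) := by
      apply Nat.dvd_factorial
      · have := sub_ne_zero.mpr hne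
        omega
      · rw [abs_le] at hm hm'
        omega
    have hd' : (m - m') ∣ ((Nat.factorial (2 * c) : ℕ) : ℤ) := Int.natAbs_dvd.mp (by exact_mod_cast hd)
    obtain ⟨e, he⟩ := hd'
    have heR : (Nat.factorial (2 * c) : ℝ) = ((m : ℝ) - m') * e := by exact_mod_cast he
    have hz : (Nat.factorial (2 * c) : ℝ) * t = ((e * (a' - a) : ℤ) : ℝ) := by
      rw [heR]; push_cast; linear_combination (e : ℝ) * h
    rw [hz] at h1 h2
    have h1' : j < e * (a' - a) := by exact_mod_cast h1
    have h2' : e * (a' - a) < j + 1 := by exact_mod_cast h2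
    omega
  subst hmm
  refine ⟨?_, rfl⟩
  have : (a : ℝ) = a' := by linarith
  exact_mod_cast this

/-- The part of `[0,1]` assigned to the `j`-th interval. -/
def InCell (N : ℕ) (j : ℕ) (x : ℝ) : Prop :=
  (j : ℝ) ≤ N * x ∧ ((N : ℝ) * x < j + 1 ∨ (x = 1 ∧ j + 1 = N))

lemma exists_cell (N : ℕ) (hN : 0 < N) (x : ℝ) (h0 : 0 ≤ x) (h1 : x ≤ 1) :
    ∃ j : Fin N, InCell N j x := by
  rcases h1.lt_or_eq with h1 | h1
  · have hNR : (0 : ℝ) < N := by exact_mod_cast hN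
    have hnn : 0 ≤ (N : ℝ) * x := by positivity
    refine ⟨⟨⌊(N : ℝ) * x⌋₊, ?_⟩, Nat.floor_le hnn, Or.inl (Nat.lt_floor_add_one _)⟩
    rw [Nat.floor_lt hnn]
    nlinarith
  · refine ⟨⟨N - 1, by omega⟩, ?_, Or.inr ⟨h1, by simp; omega⟩⟩
    subst h1
    simp

lemma exists_piece (k : ℕ) (t : ℕ → ℝ) (h0 : t 0 = 0) (x : ℝ) (hx : 0 ≤ x) (hxk : x < t k) :
    ∃ i < k, t i ≤ x ∧ x < t (i + 1) := by
  induction k with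
  | zero => linarith
  | succ k ih =>
    by_cases h : x < t k
    · obtain ⟨i, hi, h⟩ := ih h
      exact ⟨i, by omega, h⟩
    · exact ⟨k, by omega, not_lt.mp h, hxk⟩

lemma cell_affine (c : ℕ) (f : Set.Icc (0 : ℝ) 1 → ℝ)
    (hf0 : f ⟨0, Set.left_mem_Icc.mpr zero_le_one⟩ = 0)
    (hf : PiecewiseAlong {g | ∃ a m : ℤ, |m| ≤ (c : ℤ) ∧
          g = fun t : ℝ => (a : ℝ) + (m : ℝ) * t} f) (j : ℕ) (hj : j < Nat.factorial (2 * c)) :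
    ∃ G : ℤ × ℤ, G ∈ Set.Icc (-(2 * c : ℤ)) (2 * c) ×ˢ Set.Icc (-(c : ℤ)) c ∧
      ∀ x : Set.Icc (0 : ℝ) 1, InCell (Nat.factorial (2 * c)) j x → f x = G.1 + G.2 * (x : ℝ) := by
  obtain ⟨k, t, ht0, htk, hlt, hp⟩ := hf
  have hp' : ∀ i, ∃ G : ℤ × ℤ, i < k → |G.2| ≤ (c : ℤ) ∧ ∀ x : Set.Icc (0 : ℝ) 1,
      t i ≤ (x : ℝ) → (x : ℝ) ≤ t (i + 1) → f x = G.1 + G.2 * (x : ℝ) := by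
    intro i
    by_cases hi : i < k
    · obtain ⟨g, ⟨a, m, hm, rfl⟩, h⟩ := hp i hi
      exact ⟨(a, m), fun _ => ⟨hm, h⟩⟩
    · exact ⟨0, fun h => absurd h hi⟩
  choose G hG using hp'
  have hmono : ∀ i i', i ≤ i' → i' ≤ k → t i ≤ t i' := by
    intro i i' h
    induction i', h using Nat.le_induction with
    | base => intro _; exact le_rfl
    | succ n hn ih => intro h; exact (ih (by omega)).trans (hlt n (by omega)).le
  have hmem : ∀ i, i ≤ k → t i ∈ Set.Icc (0 : ℝ) 1 := fun i hi =>
    ⟨ht0 ▸ hmono 0 i (by omega) hi, htk ▸ hmono i k hi le_rfl⟩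
  have hcR : ∀ i < k, |((G i).2 : ℝ)| ≤ c := fun i hi => by exact_mod_cast (hG i hi).1
  -- bound at nodes
  have hb : ∀ i (hi : i ≤ k), |f ⟨t i, hmem i hi⟩| ≤ c * t i := by
    intro i
    induction i with
    | zero =>
      intro hi
      have : (⟨t 0, hmem 0 hi⟩ : Set.Icc (0 : ℝ) 1) = ⟨0, Set.left_mem_Icc.mpr zero_le_one⟩ :=
        Subtype.ext ht0
      rw [this, hf0, ht0]; simp
    | succ i ih =>
      intro hi
      have h1 := ih (by omega)
      have hl := hlt i (by omega)
      have e1 := (hG i (by omega)).2 ⟨t i, hmem i (by omega)⟩ le_rfl hl.le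
      have e2 := (hG i (by omega)).2 ⟨t (i + 1), hmem (i + 1) hi⟩ hl.le le_rfl
      have h3 := hcR i (by omega)
      simp only at e1 e2
      rw [e1] at h1
      rw [e2]
      rw [abs_le] at *
      constructor <;> nlinarith
  have hI : ∀ i < k, G i ∈ Set.Icc (-(2 * c : ℤ)) (2 * c) ×ˢ Set.Icc (-(c : ℤ)) c := by
    intro i hi
    have h1 := hb i hi.le
    have e1 := (hG i hi).2 ⟨t i, hmem i hi.le⟩ le_rfl (hlt i hi).le
    have h3 := hcR i hi
    obtain ⟨m0, m1⟩ := hmem i hi.le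
    simp only at e1
    rw [e1] at h1
    have hc0 : (0 : ℝ) ≤ c := by positivity
    rw [abs_le] at h1 h3
    have l1 : -(2 * (c : ℝ)) ≤ (G i).1 := by nlinarith
    have l2 : ((G i).1 : ℝ) ≤ 2 * c := by nlinarith
    refine ⟨⟨by exact_mod_cast l1, by exact_mod_cast l2⟩, abs_le.mp (hG i hi).1⟩
  set N := Nat.factorial (2 * c) with hN
  have hNpos : (0 : ℝ) < N := by exact_mod_cast Nat.factorial_pos _
  have key : ∀ i i', i ≤ i' → i' < k → (j : ℝ) < N * t (i + 1) → (N : ℝ) * t i' < j + 1 →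
      G i = G i' := by
    intro i i' h
    induction i', h using Nat.le_induction with
    | base => intros; rfl
    | succ n hn ih =>
      intro hk h1 h2
      have hl := hlt n (by omega)
      have h3 : (N : ℝ) * t n < j + 1 := lt_trans (mul_lt_mul_of_pos_left hl hNpos) h2
      rw [ih (by omega) h1 h3]
      have h4 : (j : ℝ) < N * t (n + 1) := h1.trans_le
        (mul_le_mul_of_nonneg_left (hmono _ _ (by omega) (by omega)) hNpos.le)
      have e1 := (hG n (by omega)).2 ⟨t (n + 1), hmem (n + 1) hk.le⟩ hl.le le_rfl
      have e2 := (hG (n + 1) hk).2 ⟨t (n + 1), hmem (n + 1) hk.le⟩ le_rfl (hlt _ hk).le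
      have := no_crossing c _ _ _ _ (hG n (by omega)).1 (hG (n + 1) hk).1 (t (n + 1)) (j : ℕ)
        (by exact_mod_cast h4) (by exact_mod_cast h2) (e1.symm.trans e2)
      exact Prod.ext this.1 this.2
  have hpiece : ∀ x : ℝ, x ∈ Set.Icc (0 : ℝ) 1 → InCell N j x → ∃ i < k, t i ≤ x ∧ x ≤ t (i + 1) ∧
      (j : ℝ) < N * t (i + 1) ∧ (N : ℝ) * t i < j + 1 := by
    rintro x ⟨hx0, hx1⟩ ⟨hc1, hc2⟩
    rcases hx1.lt_or_eq with hx1 | hx1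
    · obtain ⟨i, hi, h1, h2⟩ := exists_piece k t ht0 x hx0 (htk ▸ hx1)
      have hc2 : (N : ℝ) * x < j + 1 := hc2.resolve_right (fun h => hx1.ne h.1)
      exact ⟨i, hi, h1, h2.le, hc1.trans_lt (mul_lt_mul_of_pos_left h2 hNpos),
        (mul_le_mul_of_nonneg_left h1 hNpos.le).trans_lt hc2⟩
    · have hk : k ≠ 0 := by
        rintro rfl
        linarith
      obtain ⟨n, rfl⟩ := Nat.exists_eq_succ_of_ne_zero hk
      have hl := hlt n (by omega)
      simp only [Nat.succ_eq_add_one] at *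
      have hjN : ((j : ℕ) : ℝ) < N := by exact_mod_cast hj
      refine ⟨n, by omega, by linarith, by linarith, by rw [htk]; linarith, ?_⟩
      have h5 := mul_lt_mul_of_pos_left hl hNpos
      rw [htk] at h5
      rcases hc2 with h | h
      · subst hx1; linarith
      · have : ((j : ℕ) : ℝ) + 1 = N := by exact_mod_cast h.2
        linarith
  have hjN : ((j : ℕ) : ℝ) < N := by exact_mod_cast hj
  obtain ⟨i, hi, -, -, hi3, hi4⟩ := hpiece ((j : ℕ) / N)
    ⟨by positivity, by rw [div_le_one hNpos]; exact hjN.le⟩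
    ⟨by rw [mul_div_cancel₀ _ hNpos.ne'], Or.inl (by rw [mul_div_cancel₀ _ hNpos.ne']; linarith)⟩
  refine ⟨G i, hI i hi, fun x hx => ?_⟩
  obtain ⟨i', hi', g1, g2, g3, g4⟩ := hpiece x x.2 hx
  have : G i = G i' := by
    rcases le_total i i' with h | h
    · exact key i i' h hi' hi3 g4
    · exact (key i' i h hi g3 hi4).symm
  rw [this]
  exact (hG i' hi').2 x g1 g2


/-- For a fixed concordance genus `c ≥ 1`, there are only finitely many continuous
functions `f : [0,1] → ℝ` with `f 0 = 0` that are piecewise along the set of affine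
functions with integer intercept and integer slope of absolute value at most `c`.
This is the combinatorial content of the theorem that for a fixed concordance genus
there are only finitely many possibilities for the invariant `Υ_K(t)`. -/
theorem finitely_many_upsilon_shapes (c : ℕ) (hc : 1 ≤ c) :
    {f : C(Set.Icc (0 : ℝ) 1, ℝ) |
        f ⟨0, Set.left_mem_Icc.mpr zero_le_one⟩ = 0 ∧
        PiecewiseAlong {g | ∃ a m : ℤ, |m| ≤ (c : ℤ) ∧
          g = fun t : ℝ => (a : ℝ) + (m : ℝ) * t} f}.Finite := by
  have hT : (Set.univ.pi (fun _ : Fin (Nat.factorial (2 * c)) =>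
      Set.Icc (-(2 * c : ℤ)) (2 * c) ×ˢ Set.Icc (-(c : ℤ)) c)).Finite :=
    Set.Finite.pi' (fun _ => (Set.finite_Icc _ _).prod (Set.finite_Icc _ _)) |>.subset
      (fun G hG i => hG i (Set.mem_univ i))
  refine Set.Finite.subset (hT.biUnion (t := fun G => {f : C(Set.Icc (0 : ℝ) 1, ℝ) |
    ∀ j : Fin (Nat.factorial (2 * c)), ∀ x : Set.Icc (0 : ℝ) 1,
      InCell (Nat.factorial (2 * c)) j x → f x = (G j).1 + (G j).2 * (x : ℝ)})
    (fun G _ => Set.Subsingleton.finite ?_)) ?_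
  · intro f hf f' hf'
    ext x
    obtain ⟨j, hj⟩ := exists_cell _ (Nat.factorial_pos (2 * c)) x x.2.1 x.2.2
    rw [hf j x hj, hf' j x hj]
  · rintro f ⟨hf0, hf⟩
    choose G hG1 hG2 using
      fun j : Fin (Nat.factorial (2 * c)) => cell_affine c f hf0 hf j j.2
    exact Set.mem_iUnion₂.mpr ⟨G, fun j _ => hG1 j, hG2⟩
end
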